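/- arXiv:math/0112021 — 2 statements merged into one kernel-verified Lean document; each statement's English description precedes it below -/
import Mathlib

section
/- Let R be a behavior with input-value space 𝒰 and output-value space 𝒴, and S a behavior with input-value space 𝒴 and output-value space 𝒵, with 𝒴 and 𝒵 complete. Suppose R has Cauchy gain γ₁ ∈ 𝒦∞ and incremental limit gain κ₁ ∈ 𝒦∞, and S has Cauchy gain γ₂ ∈ 𝒦∞ and incremental limit gain κ₂ ∈ 𝒦∞. Then the cascade S ∘ R has incremental limit gain κ₂ ∘ κ₁; that is, whenever (ω_i, η_i) ∈ R and (η_i, ζ_i) ∈ S with ‖ω_i‖_aa = 0 for i = 1,2, the limits ω_i^∞, ζ_i^∞ exist and d(ζ₁^∞, ζ₂^∞) ≤ κ₂(κ₁(d(ω₁^∞, ω₂^∞))). -/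
open Filter Topology MeasureTheory
open scoped ENNReal NNReal

noncomputable def aa {M : Type*} [PseudoMetricSpace M] (ω : ℝ → M) : ℝ≥0∞ :=
  Filter.limsup (fun p : ℝ × ℝ => edist (ω p.1) (ω p.2)) (Filter.atTop ×ˢ Filter.atTop)

def KInfty (γ : ℝ≥0 → ℝ≥0) : Prop :=
  Continuous γ ∧ StrictMono γ ∧ γ 0 = 0 ∧ Filter.Tendsto γ Filter.atTop Filter.atTop

noncomputable def extK (γ : ℝ≥0 → ℝ≥0) : ℝ≥0∞ → ℝ≥0∞ :=
  fun x => if x = ⊤ then ⊤ else ↑(γ x.toNNReal)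

def CauchyGain {U Y : Type*} [PseudoMetricSpace U] [PseudoMetricSpace Y]
    (R : Set ((ℝ → U) × (ℝ → Y))) (γ : ℝ≥0 → ℝ≥0) : Prop :=
  ∀ p ∈ R, aa p.2 ≤ extK γ (aa p.1)

def IncGain {U Y : Type*} [PseudoMetricSpace U] [PseudoMetricSpace Y]
    (R : Set ((ℝ → U) × (ℝ → Y))) (κ : ℝ≥0 → ℝ≥0) : Prop :=
  ∀ p₁ ∈ R, ∀ p₂ ∈ R, ∀ u₁ u₂ : U,
    Filter.Tendsto p₁.1 Filter.atTop (nhds u₁) → Filter.Tendsto p₂.1 Filter.atTop (nhds u₂) →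
    Filter.limsup (fun t => edist (p₁.2 t) (p₂.2 t)) Filter.atTop ≤ ↑(κ (nndist u₁ u₂))

def convTo {U : Type*} [PseudoMetricSpace U] (ω : ℝ → U) (U₀ : Set U) : Prop :=
  ∀ ε > 0, ∃ T : ℝ, 0 ≤ T ∧ ∀ t ≥ T, ∃ u' ∈ U₀, dist (ω t) u' ≤ ε

def omegaLim {U : Type*} [PseudoMetricSpace U] (ω : ℝ → U) : Set U :=
  {u | ∃ t : ℕ → ℝ, Filter.Tendsto t Filter.atTop Filter.atTop ∧
       Filter.Tendsto (fun i => ω (t i)) Filter.atTop (nhds u)}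

def Precomp {U : Type*} [TopologicalSpace U] (ω : ℝ → U) : Prop :=
  ∃ K : Set U, IsCompact K ∧ ∀ t : ℝ, 0 ≤ t → ω t ∈ K

def cascade {U Y Z : Type*} (R : Set ((ℝ → U) × (ℝ → Y))) (S : Set ((ℝ → Y) × (ℝ → Z))) :
    Set ((ℝ → U) × (ℝ → Z)) :=
  {p | ∃ η : ℝ → Y, (p.1, η) ∈ R ∧ (η, p.2) ∈ S}

def CauchyGainOn {U Y : Type*} [PseudoMetricSpace U] [PseudoMetricSpace Y]
    (R : Set ((ℝ → U) × (ℝ → Y))) (γ : ℝ≥0 → ℝ≥0) (U₀ : Set U) : Prop :=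
  ∀ p ∈ R, convTo p.1 U₀ → aa p.2 ≤ extK γ (aa p.1)

def IncGainOn {U Y : Type*} [PseudoMetricSpace U] [PseudoMetricSpace Y]
    (R : Set ((ℝ → U) × (ℝ → Y))) (κ : ℝ≥0 → ℝ≥0) (U₀ : Set U) : Prop :=
  ∀ p₁ ∈ R, ∀ p₂ ∈ R, ∀ u₁ u₂ : U, u₁ ∈ U₀ → u₂ ∈ U₀ →
    Filter.Tendsto p₁.1 Filter.atTop (nhds u₁) → Filter.Tendsto p₂.1 Filter.atTop (nhds u₂) →
    Filter.limsup (fun t => edist (p₁.2 t) (p₂.2 t)) Filter.atTop ≤ ↑(κ (nndist u₁ u₂))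

def ZV {E : Type*} (X : Set E) (V : E → ℝ) : Set E := {x ∈ X | V x = 0}

def UDecrease {E 𝒰 : Type*} [NormedAddCommGroup E] [NormedSpace ℝ E] [PseudoMetricSpace 𝒰]
    (X₀ X : Set E) (f : E → 𝒰 → E) (Uset : Set 𝒰) (V : E → ℝ) : Prop :=
  (∀ x ∈ X, 0 ≤ V x) ∧ ContinuousOn V X ∧
  (∀ a b : ℝ, 0 ≤ a → a ≤ b → IsCompact {x ∈ X | a ≤ V x ∧ V x ≤ b}) ∧
  (∀ x ∈ X, V x ≠ 0 → ∃ (W : Set E) (Vt : E → ℝ), IsOpen W ∧ x ∈ W ∧ W ⊆ X₀ ∧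
    ContDiffOn ℝ 1 Vt W ∧ (∀ z ∈ W ∩ X, Vt z = V z) ∧
    ∀ u ∈ Uset, fderiv ℝ Vt x (f x u) < 0)

/-
A signal with zero asymptotic amplitude is the same as one that is Cauchy at infinity, and a Cauchy
gain maps such signals to such signals because `γ 0 = 0`. This is what makes the intermediate
signals of the cascade converge, so that the incremental gain of `S` applies to them and the two
estimates compose.
-/

section Amplitude

variable {M : Type*} [PseudoMetricSpace M] {ω : ℝ → M}

theorem aa_eq_zero_iff_cauchy_map : aa ω = 0 ↔ Cauchy (map ω atTop) := by
  rw [cauchy_map_iff', uniformity_basis_edist.tendsto_right_iff]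
  refine ⟨fun h ε hε => eventually_lt_of_limsup_lt (h.trans_lt hε), fun h => ?_⟩
  refine nonpos_iff_eq_zero.1 (le_of_forall_gt_imp_ge_of_dense fun ε hε => ?_)
  exact limsup_le_of_le (h := (h ε hε).mono fun _ hp => hp.le)

theorem aa_eq_zero_of_tendsto {u : M} (h : Tendsto ω atTop (𝓝 u)) : aa ω = 0 :=
  aa_eq_zero_iff_cauchy_map.2 h.cauchy_map

theorem exists_tendsto_of_aa_eq_zero [CompleteSpace M] (h : aa ω = 0) :
    ∃ u, Tendsto ω atTop (𝓝 u) :=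
  cauchy_map_iff_exists_tendsto.1 (aa_eq_zero_iff_cauchy_map.1 h)

end Amplitude

section Gains

variable {U Y Z : Type*} [PseudoMetricSpace U] [PseudoMetricSpace Y] [PseudoMetricSpace Z]
  {R : Set ((ℝ → U) × (ℝ → Y))} {S : Set ((ℝ → Y) × (ℝ → Z))} {γ κ κ₁ κ₂ : ℝ≥0 → ℝ≥0}

theorem extK_zero (hγ : γ 0 = 0) : extK γ 0 = 0 := by
  simp [extK, hγ]

theorem CauchyGain.aa_eq_zero (hR : CauchyGain R γ) (hγ : γ 0 = 0) {ω : ℝ → U} {η : ℝ → Y}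
    (h : (ω, η) ∈ R) (hω : aa ω = 0) : aa η = 0 := by
  have hη : aa η ≤ extK γ (aa ω) := hR (ω, η) h
  rwa [hω, extK_zero hγ, nonpos_iff_eq_zero] at hη

theorem IncGain.nndist_le (hR : IncGain R κ) {ω₁ ω₂ : ℝ → U} {η₁ η₂ : ℝ → Y}
    (h₁ : (ω₁, η₁) ∈ R) (h₂ : (ω₂, η₂) ∈ R) {u₁ u₂ : U} {y₁ y₂ : Y}
    (hω₁ : Tendsto ω₁ atTop (𝓝 u₁)) (hω₂ : Tendsto ω₂ atTop (𝓝 u₂))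
    (hη₁ : Tendsto η₁ atTop (𝓝 y₁)) (hη₂ : Tendsto η₂ atTop (𝓝 y₂)) :
    nndist y₁ y₂ ≤ κ (nndist u₁ u₂) := by
  rw [← ENNReal.coe_le_coe, ← edist_nndist, ← (hη₁.edist hη₂).limsup_eq]
  exact hR _ h₁ _ h₂ u₁ u₂ hω₁ hω₂

theorem IncGain.cascade [CompleteSpace Y] (hR : IncGain R κ₁) (hS : IncGain S κ₂)
    (hκ₂ : Monotone κ₂) (hRγ : CauchyGain R γ) (hγ : γ 0 = 0) :
    IncGain (cascade R S) (κ₂ ∘ κ₁) := by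
  rintro ⟨ω₁, ζ₁⟩ ⟨η₁, hR₁, hS₁⟩ ⟨ω₂, ζ₂⟩ ⟨η₂, hR₂, hS₂⟩ u₁ u₂ hω₁ hω₂
  obtain ⟨y₁, hη₁⟩ :=
    exists_tendsto_of_aa_eq_zero (hRγ.aa_eq_zero hγ hR₁ (aa_eq_zero_of_tendsto hω₁))
  obtain ⟨y₂, hη₂⟩ :=
    exists_tendsto_of_aa_eq_zero (hRγ.aa_eq_zero hγ hR₂ (aa_eq_zero_of_tendsto hω₂))
  have hy : nndist y₁ y₂ ≤ κ₁ (nndist u₁ u₂) := hR.nndist_le hR₁ hR₂ hω₁ hω₂ hη₁ hη₂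
  calc limsup (fun t => edist (ζ₁ t) (ζ₂ t)) atTop
      ≤ κ₂ (nndist y₁ y₂) := hS _ hS₁ _ hS₂ y₁ y₂ hη₁ hη₂
    _ ≤ κ₂ (κ₁ (nndist u₁ u₂)) := ENNReal.coe_le_coe.2 (hκ₂ hy)

end Gains

theorem stmt7_general {𝒰 𝒴 𝒵 : Type*} [PseudoMetricSpace 𝒰] [CompleteSpace 𝒰]
    [PseudoMetricSpace 𝒴] [CompleteSpace 𝒴] [PseudoMetricSpace 𝒵] [CompleteSpace 𝒵]
    {R : Set ((ℝ → 𝒰) × (ℝ → 𝒴))} {S : Set ((ℝ → 𝒴) × (ℝ → 𝒵))}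
    {γ₁ γ₂ κ₁ κ₂ : ℝ≥0 → ℝ≥0}
    (hγ₁ : γ₁ 0 = 0) (hγ₂ : γ₂ 0 = 0) (hκ₂ : Monotone κ₂)
    (hR : CauchyGain R γ₁) (hS : CauchyGain S γ₂)
    (hRi : IncGain R κ₁) (hSi : IncGain S κ₂)
    (ω₁ ω₂ : ℝ → 𝒰) (η₁ η₂ : ℝ → 𝒴) (ζ₁ ζ₂ : ℝ → 𝒵)
    (hR₁ : (ω₁, η₁) ∈ R) (hS₁ : (η₁, ζ₁) ∈ S) (hR₂ : (ω₂, η₂) ∈ R) (hS₂ : (η₂, ζ₂) ∈ S)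
    (hω₁ : aa ω₁ = 0) (hω₂ : aa ω₂ = 0) :
    ∃ (u₁ u₂ : 𝒰) (z₁ z₂ : 𝒵),
      Tendsto ω₁ atTop (𝓝 u₁) ∧ Tendsto ω₂ atTop (𝓝 u₂) ∧
      Tendsto ζ₁ atTop (𝓝 z₁) ∧ Tendsto ζ₂ atTop (𝓝 z₂) ∧
      nndist z₁ z₂ ≤ κ₂ (κ₁ (nndist u₁ u₂)) := by
  have hζ₁ : aa ζ₁ = 0 := hS.aa_eq_zero hγ₂ hS₁ (hR.aa_eq_zero hγ₁ hR₁ hω₁)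
  have hζ₂ : aa ζ₂ = 0 := hS.aa_eq_zero hγ₂ hS₂ (hR.aa_eq_zero hγ₁ hR₂ hω₂)
  obtain ⟨u₁, hu₁⟩ := exists_tendsto_of_aa_eq_zero hω₁
  obtain ⟨u₂, hu₂⟩ := exists_tendsto_of_aa_eq_zero hω₂
  obtain ⟨z₁, hz₁⟩ := exists_tendsto_of_aa_eq_zero hζ₁
  obtain ⟨z₂, hz₂⟩ := exists_tendsto_of_aa_eq_zero hζ₂
  have hSR : IncGain (cascade R S) (κ₂ ∘ κ₁) := hRi.cascade hSi hκ₂ hR hγ₁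
  exact ⟨u₁, u₂, z₁, z₂, hu₁, hu₂, hz₁, hz₂,
    hSR.nndist_le ⟨η₁, hR₁, hS₁⟩ ⟨η₂, hR₂, hS₂⟩ hu₁ hu₂ hz₁ hz₂⟩

/-- the cascade `S ∘ R` has incremental limit gain `κ₂ ∘ κ₁`:
for any two input/output chains with `‖ω_i‖_aa = 0`, the limits `ω_i^∞, ζ_i^∞`
exist and `d(ζ₁^∞,ζ₂^∞) ≤ κ₂(κ₁(d(ω₁^∞,ω₂^∞)))`. -/
theorem stmt7 {𝒰 𝒴 𝒵 : Type*} [MetricSpace 𝒰] [CompleteSpace 𝒰]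
    [MetricSpace 𝒴] [CompleteSpace 𝒴] [MetricSpace 𝒵] [CompleteSpace 𝒵]
    (R : Set ((ℝ → 𝒰) × (ℝ → 𝒴))) (S : Set ((ℝ → 𝒴) × (ℝ → 𝒵)))
    (γ₁ γ₂ κ₁ κ₂ : ℝ≥0 → ℝ≥0)
    (hγ₁ : KInfty γ₁) (hγ₂ : KInfty γ₂) (hκ₁ : KInfty κ₁) (hκ₂ : KInfty κ₂)
    (hR : CauchyGain R γ₁) (hS : CauchyGain S γ₂)
    (hRi : IncGain R κ₁) (hSi : IncGain S κ₂) :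
    ∀ ω₁ ω₂ : ℝ → 𝒰, ∀ η₁ η₂ : ℝ → 𝒴, ∀ ζ₁ ζ₂ : ℝ → 𝒵,
      (ω₁, η₁) ∈ R → (η₁, ζ₁) ∈ S → (ω₂, η₂) ∈ R → (η₂, ζ₂) ∈ S →
      aa ω₁ = 0 → aa ω₂ = 0 →
      ∃ (u₁ u₂ : 𝒰) (z₁ z₂ : 𝒵),
        Filter.Tendsto ω₁ Filter.atTop (nhds u₁) ∧ Filter.Tendsto ω₂ Filter.atTop (nhds u₂) ∧
        Filter.Tendsto ζ₁ Filter.atTop (nhds z₁) ∧ Filter.Tendsto ζ₂ Filter.atTop (nhds z₂) ∧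
        nndist z₁ z₂ ≤ κ₂ (κ₁ (nndist u₁ u₂)) :=
  stmt7_general hγ₁.2.2.1 hγ₂.2.2.1 hκ₂.2.1.monotone hR hS hRi hSi
end

section
/- Let R be a behavior with input-value space 𝒰 and output-value space 𝒴, where 𝒴 is a complete metric space. If R has a Cauchy gain γ ∈ 𝒦∞, then R has the converging-input converging-output property: for every (ω,η) ∈ R, if ω(t) → ū as t → ∞ for some ū ∈ 𝒰, then η(t) → ȳ as t → ∞ for some ȳ ∈ 𝒴. -/
open Filter Topology MeasureTheory
open scoped ENNReal NNReal

theorem limsup_eq_bot_iff_tendsto {ι α : Type*} [CompleteLinearOrder α] [TopologicalSpace α]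
    [OrderTopology α] {l : Filter ι} [l.NeBot] {u : ι → α} :
    limsup u l = ⊥ ↔ Tendsto u l (𝓝 ⊥) :=
  ⟨fun h ↦ tendsto_of_le_liminf_of_limsup_le bot_le h.le, Tendsto.limsup_eq⟩

theorem cauchy_map_iff_tendsto_edist {ι M : Type*} [PseudoEMetricSpace M] {l : Filter ι}
    [l.NeBot] {f : ι → M} :
    Cauchy (map f l) ↔
      Tendsto (fun p : ι × ι ↦ edist (f p.1) (f p.2)) (l ×ˢ l) (𝓝 0) := by
  simp only [cauchy_map_iff', uniformity_basis_edist.tendsto_right_iff,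
    ENNReal.nhds_zero_basis.tendsto_right_iff, Set.mem_ofPred_eq, Set.mem_Iio]

theorem cauchy_map_iff_aa_eq_zero {M : Type*} [PseudoMetricSpace M] {ω : ℝ → M} :
    Cauchy (map ω atTop) ↔ aa ω = 0 :=
  cauchy_map_iff_tendsto_edist.trans limsup_eq_bot_iff_tendsto.symm

theorem extK_coe (γ : ℝ≥0 → ℝ≥0) (x : ℝ≥0) : extK γ x = γ x := by
  simp [extK]

theorem stmt8_general {𝒰 𝒴 : Type*} [PseudoMetricSpace 𝒰] [PseudoMetricSpace 𝒴]
    {R : Set ((ℝ → 𝒰) × (ℝ → 𝒴))} {γ : ℝ≥0 → ℝ≥0} (hγ : γ 0 = 0) (hR : CauchyGain R γ)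
    {ω : ℝ → 𝒰} {η : ℝ → 𝒴} (hmem : (ω, η) ∈ R) (hω : Cauchy (map ω atTop)) :
    Cauchy (map η atTop) := by
  rw [cauchy_map_iff_aa_eq_zero] at hω ⊢
  refine nonpos_iff_eq_zero.1 ?_
  calc
    aa η ≤ extK γ (aa ω) := hR (ω, η) hmem
    _ = extK γ (0 : ℝ≥0) := by rw [hω, ENNReal.coe_zero]
    _ = 0 := by rw [extK_coe, hγ, ENNReal.coe_zero]

/-- a behavior admitting a Cauchy gain has the converging-input
converging-output property. -/
theorem stmt8 {𝒰 𝒴 : Type*} [MetricSpace 𝒰] [MetricSpace 𝒴] [CompleteSpace 𝒴]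
    (R : Set ((ℝ → 𝒰) × (ℝ → 𝒴))) (γ : ℝ≥0 → ℝ≥0) (hγ : KInfty γ)
    (hR : CauchyGain R γ) :
    ∀ ω : ℝ → 𝒰, ∀ η : ℝ → 𝒴, (ω, η) ∈ R →
      ∀ ubar : 𝒰, Filter.Tendsto ω Filter.atTop (nhds ubar) →
      ∃ ybar : 𝒴, Filter.Tendsto η Filter.atTop (nhds ybar) := by
  intro ω η hmem ubar hω
  exact cauchy_map_iff_exists_tendsto.1 (stmt8_general hγ.2.2.1 hR hmem hω.cauchy_map)
end
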